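/- There exists a constant C₄ > 0 such that for every bounded continuous function b : ℝ → ℝ and every t > 0, the quantity J₅ = ∫_0^t ∫_{s₁}^t ∫_{s₂}^t ∫_{s₃}^t ∫_{ℝ⁴} b(y₁) b(y₂) b(y₃) b(y₄) · q_{s₁}(y₁) q_{s₂−s₁}''(y₂−y₁) q_{s₃−s₂}(y₃−y₂) q_{s₄−s₃}''(y₄−y₃) dy₁ dy₂ dy₃ dy₄ ds₄ ds₃ ds₂ ds₁ satisfies |J₅| ≤ C₄ ‖b‖_∞⁴ t². -/

import Mathlib

/-!
Writing `P_u` for the heat semigroup, every `q''` is a time derivative, `∂_u P_u = ½ ∂² P_u`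
(`hasDerivAt_heatP`), so the two non-integrable kernels can be integrated in time before absolute
values are taken.

*The integral in `s₄`.* The space integrals in `y₃, y₄` give
`pairG b σ u x = ∫ b(y) q_σ(y - x) ∂_y² (P_u b)(y) dy` with `σ = s₃ - s₂`, `u = s₄ - s₃`, which is
`2 d/du ∫ b(y) q_σ(y - x) (P_u b)(y) dy`. Integrating in `u` up to `t - s₃` yields `P_σ` applied to
the bounded function `source b t s₃ = 2 b (P_{t - s₃} b - b)`, which is at most `4 B²`. Exchanging
this time integral with the outer space integrals needs absolute integrability down to `u = 0`,
although `b` is merely continuous. It follows from a one-sided bound, since the primitive is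
continuous up to `u = 0`. The one-sided bound `pairG ≤ K / √u` (`exists_pairG_le`) holds because
`-q_u''` is a positive semidefinite kernel (`quadForm_k2_nonpos`), up to a commutator with the
Lipschitz weight `√q_σ`, which costs only `u^{-1/2}`.

*The integral in `s₃`.* It turns the source `c = source b t` into
`backD c t s = ∫_s^t P_{r - s} c_r dr`, which solves the backward heat equation
`∂_s D + ½ D'' = -c`. It is bounded by `M (t - s)` when `|c| ≤ M`, and Hölder continuous in `s` of
order `1/2` (`abs_backD_sub_le`).

*The integral in `s₂`.* In `∫ b q_{s₁} ∂²P_{s₂ - s₁}(b D(s₂))` replace `D(s₂)` by `D(s₁)`. The error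
is `O((s₂ - s₁)^{-1/2})`, because the Hölder bound gains `√(s₂ - s₁)` over the singularity
`1 / (s₂ - s₁)`. The frozen term is the exact derivative of a bounded function, so it contributes
only boundary values (`abs_integral_le_of_near_deriv`, `abs_integral_backD_le`). The result is
`O(B⁴ (t - s₁))`, and integrating in `s₁` gives `t²`. No integrability is needed for the two outer
time integrals: a Bochner integral of a non-integrable function is `0`, and the bounds persist.
-/

open MeasureTheory intervalIntegral

/-- The heat kernel `q_t(x) = exp(−x²/(2t))/√(2πt)`. -/
noncomputable def heatK (t x : ℝ) : ℝ := Real.exp (-x ^ 2 / (2 * t)) / Real.sqrt (2 * Real.pi * t)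

/-- `q_t''(x)`, the second spatial derivative of the heat kernel. -/
noncomputable def heatK'' (t x : ℝ) : ℝ := deriv (deriv (fun y => heatK t y)) x

/-! ### The heat kernel and its derivatives -/

/-- The explicit formula `(x² / t² - 1 / t) q_t(x)` for `q_t''(x)`. -/
noncomputable def k2 (t x : ℝ) : ℝ := (x ^ 2 / t ^ 2 - 1 / t) * heatK t x

/-- The explicit formula `-(x / t) q_t(x)` for `q_t'(x)`. -/
noncomputable def k1 (t x : ℝ) : ℝ := -(x / t) * heatK t x

lemma heatK_nonneg (t x : ℝ) : 0 ≤ heatK t x := by unfold heatK; positivity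

lemma heatK_pos {t : ℝ} (ht : 0 < t) (x : ℝ) : 0 < heatK t x := by unfold heatK; positivity

lemma hasDerivAt_heatK (t x : ℝ) : HasDerivAt (heatK t) (k1 t x) x := by
  have h : HasDerivAt (fun y : ℝ => -y ^ 2 / (2 * t)) (-(2 * x) / (2 * t)) x := by
    simpa using ((hasDerivAt_pow 2 x).neg).div_const (2 * t)
  refine (h.exp.div_const (Real.sqrt (2 * Real.pi * t))).congr_deriv ?_
  unfold k1 heatK
  rw [show -(2 * x) / (2 * t) = -(x / t) by rw [neg_div, mul_div_mul_left _ _ two_ne_zero]]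
  ring

lemma hasDerivAt_k1 (t x : ℝ) : HasDerivAt (k1 t) (k2 t x) x := by
  have h : HasDerivAt (fun y : ℝ => -(y / t)) (-(1 / t)) x := ((hasDerivAt_id x).div_const t).neg
  refine (h.mul (hasDerivAt_heatK t x)).congr_deriv ?_
  unfold k1 k2
  ring

lemma heatK''_eq (t x : ℝ) : heatK'' t x = k2 t x := by
  unfold heatK''
  have h : deriv (fun y => heatK t y) = k1 t := funext fun y => (hasDerivAt_heatK t y).deriv
  rw [h, (hasDerivAt_k1 t x).deriv]

/-- The heat equation `∂_t q = q'' / 2`. -/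
lemma hasDerivAt_heatK_time {t : ℝ} (ht : 0 < t) (x : ℝ) :
    HasDerivAt (fun u => heatK u x) (k2 t x / 2) t := by
  have hs : 0 < 2 * Real.pi * t := by positivity
  have h1 : HasDerivAt (fun u : ℝ => -x ^ 2 / (2 * u)) (-(-x ^ 2 * 2) / (2 * t) ^ 2) t := by
    have := (hasDerivAt_const t (-x ^ 2)).div ((hasDerivAt_id t).const_mul 2) (by simp; positivity)
    exact this.congr_deriv (by simp)
  have h2 : HasDerivAt (fun u : ℝ => Real.sqrt (2 * Real.pi * u))
      (2 * Real.pi / (2 * Real.sqrt (2 * Real.pi * t))) t := by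
    have := ((hasDerivAt_id t).const_mul (2 * Real.pi)).sqrt (by simpa using hs.ne')
    simpa using this
  have hq : Real.sqrt (2 * Real.pi * t) ≠ 0 := (Real.sqrt_pos.2 hs).ne'
  refine (h1.exp.div h2 hq).congr_deriv ?_
  unfold k2 heatK
  have hsq : Real.sqrt (2 * Real.pi * t) ^ 2 = 2 * Real.pi * t := Real.sq_sqrt hs.le
  set r := Real.sqrt (2 * Real.pi * t)
  rw [hsq]
  have hpi := Real.pi_pos.ne'
  field_simp
  rw [hsq]
  ring

lemma measurable_heatK : Measurable (fun p : ℝ × ℝ => heatK p.1 p.2) := by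
  unfold heatK; fun_prop

lemma measurable_k2 : Measurable (fun p : ℝ × ℝ => k2 p.1 p.2) := by
  unfold k2 heatK; fun_prop

lemma continuous_heatK (t : ℝ) : Continuous (heatK t) := by
  unfold heatK; fun_prop

lemma continuous_k1 (t : ℝ) : Continuous (k1 t) := by
  unfold k1 heatK; fun_prop

lemma continuous_k2 (t : ℝ) : Continuous (k2 t) := by
  unfold k2 heatK; fun_prop

lemma heatK_neg (t x : ℝ) : heatK t (-x) = heatK t x := by unfold heatK; simp

lemma heatK_eq_gaussian {t : ℝ} (ht : 0 < t) :
    heatK t = ProbabilityTheory.gaussianPDFReal 0 ⟨t, ht.le⟩ := by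
  funext x
  unfold heatK ProbabilityTheory.gaussianPDFReal
  rw [sub_zero, div_eq_inv_mul]
  rfl

lemma integrable_heatK {t : ℝ} (ht : 0 < t) : Integrable (heatK t) := by
  rw [heatK_eq_gaussian ht]; exact ProbabilityTheory.integrable_gaussianPDFReal _ _

lemma integral_heatK {t : ℝ} (ht : 0 < t) : ∫ x, heatK t x = 1 := by
  rw [heatK_eq_gaussian ht]
  exact ProbabilityTheory.integral_gaussianPDFReal_eq_one _ (by
    intro h; exact ht.ne' (congrArg NNReal.toReal h))

lemma integral_heatK_sub {t : ℝ} (ht : 0 < t) (y : ℝ) : ∫ x, heatK t (x - y) = 1 := by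
  rw [integral_sub_right_eq_self (heatK t) y, integral_heatK ht]

/-- Kernels with comparable variances are comparable. -/
lemma heatK_le_of_le {v V : ℝ} (hv : 0 < v) (h : v ≤ V) (h4 : V ≤ 4 * v) (x : ℝ) :
    heatK v x ≤ 2 * heatK V x := by
  have hV : 0 < V := hv.trans_le h
  unfold heatK
  have hs : 0 < Real.sqrt (2 * Real.pi * V) := Real.sqrt_pos.2 (by positivity)
  have hs' : 0 < Real.sqrt (2 * Real.pi * v) := Real.sqrt_pos.2 (by positivity)
  have h1 : Real.exp (-x ^ 2 / (2 * v)) ≤ Real.exp (-x ^ 2 / (2 * V)) := by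
    apply Real.exp_le_exp.2
    rw [neg_div, neg_div]
    apply neg_le_neg
    gcongr
  have h2 : Real.sqrt (2 * Real.pi * V) ≤ 2 * Real.sqrt (2 * Real.pi * v) := by
    rw [show (2 : ℝ) * Real.sqrt (2 * Real.pi * v) = Real.sqrt (4 * (2 * Real.pi * v)) by
      rw [Real.sqrt_mul (by norm_num : (0 : ℝ) ≤ 4),
        show (4 : ℝ) = 2 ^ 2 by norm_num, Real.sqrt_sq (by norm_num)]]
    apply Real.sqrt_le_sqrt
    nlinarith [Real.pi_pos]
  rw [← mul_div_assoc, div_le_div_iff₀ hs' hs]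
  have := Real.exp_pos (-x ^ 2 / (2 * V))
  nlinarith [mul_le_mul h1 h2 hs.le this.le]

/-- A polynomial prefactor costs only a doubling of the variance. -/
lemma poly_mul_heatK_le {t : ℝ} (ht : 0 < t) (x : ℝ) :
    (x ^ 2 / (4 * t) + 1) * heatK t x ≤ (3 / 2) * heatK (2 * t) x := by
  unfold heatK
  have hs : 0 < Real.sqrt (2 * Real.pi * t) := Real.sqrt_pos.2 (by positivity)
  have h0 : Real.sqrt (2 * Real.pi * (2 * t)) = Real.sqrt 2 * Real.sqrt (2 * Real.pi * t) := by
    rw [← Real.sqrt_mul (by norm_num)]; congr 1; ring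
  have h2 : Real.sqrt 2 ≤ 3 / 2 := by
    rw [Real.sqrt_le_left (by norm_num)]; norm_num
  have h2' : 0 < Real.sqrt 2 := Real.sqrt_pos.2 (by norm_num)
  have h1 : Real.exp (-x ^ 2 / (2 * t))
      = Real.exp (-x ^ 2 / (2 * (2 * t))) * Real.exp (-(x ^ 2 / (4 * t))) := by
    rw [← Real.exp_add]; congr 1; field_simp; ring
  have h3 : (x ^ 2 / (4 * t) + 1) * Real.exp (-(x ^ 2 / (4 * t))) ≤ 1 := by
    rw [Real.exp_neg, ← div_eq_mul_inv, div_le_one (Real.exp_pos _)]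
    exact Real.add_one_le_exp _
  rw [h0, h1, ← mul_div_assoc, ← mul_div_assoc, div_le_div_iff₀ hs (by positivity)]
  set E := Real.exp (-x ^ 2 / (2 * (2 * t)))
  have hE : 0 < E := Real.exp_pos _
  calc (x ^ 2 / (4 * t) + 1) * (E * Real.exp (-(x ^ 2 / (4 * t))))
        * (Real.sqrt 2 * Real.sqrt (2 * Real.pi * t))
      = ((x ^ 2 / (4 * t) + 1) * Real.exp (-(x ^ 2 / (4 * t)))) * Real.sqrt 2
        * (E * Real.sqrt (2 * Real.pi * t)) := by ring
    _ ≤ 1 * (3 / 2) * (E * Real.sqrt (2 * Real.pi * t)) := by gcongr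
    _ = 3 / 2 * E * Real.sqrt (2 * Real.pi * t) := by ring

lemma abs_k2_le {t : ℝ} (ht : 0 < t) (x : ℝ) : |k2 t x| ≤ 6 / t * heatK (2 * t) x := by
  have h := poly_mul_heatK_le ht x
  have hq := heatK_nonneg t x
  unfold k2
  rw [abs_mul, abs_of_nonneg hq]
  have h1 : |x ^ 2 / t ^ 2 - 1 / t| ≤ 4 / t * (x ^ 2 / (4 * t) + 1) := by
    have e : 4 / t * (x ^ 2 / (4 * t) + 1) = x ^ 2 / t ^ 2 + 4 / t := by field_simp
    rw [e, abs_le]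
    have a : 0 ≤ x ^ 2 / t ^ 2 := by positivity
    have b : 0 ≤ 1 / t := by positivity
    have c : 4 / t = 4 * (1 / t) := by ring
    rw [c]
    constructor <;> linarith
  calc |x ^ 2 / t ^ 2 - 1 / t| * heatK t x
      ≤ 4 / t * (x ^ 2 / (4 * t) + 1) * heatK t x := by gcongr
    _ = 4 / t * ((x ^ 2 / (4 * t) + 1) * heatK t x) := by ring
    _ ≤ 4 / t * ((3 / 2) * heatK (2 * t) x) := by gcongr
    _ = 6 / t * heatK (2 * t) x := by ring

lemma abs_mul_heatK_le {t : ℝ} (ht : 0 < t) (x : ℝ) :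
    |x| * heatK t x ≤ 2 * Real.sqrt t * heatK (2 * t) x := by
  have h := poly_mul_heatK_le ht x
  have hq := heatK_nonneg t x
  have hq2 := heatK_nonneg (2 * t) x
  have hs : 0 < Real.sqrt t := Real.sqrt_pos.2 ht
  have h1 : |x| ≤ Real.sqrt t * (x ^ 2 / (4 * t) + 1) := by
    have e : x ^ 2 / (4 * t) = (|x| / (2 * Real.sqrt t)) ^ 2 := by
      rw [div_pow, sq_abs, mul_pow, Real.sq_sqrt ht.le]; ring
    rw [e]
    have e2 : |x| = Real.sqrt t * (2 * (|x| / (2 * Real.sqrt t))) := by field_simp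
    nth_rw 1 [e2]
    gcongr
    nlinarith [sq_nonneg (|x| / (2 * Real.sqrt t) - 1)]
  calc |x| * heatK t x ≤ Real.sqrt t * (x ^ 2 / (4 * t) + 1) * heatK t x := by gcongr
    _ = Real.sqrt t * ((x ^ 2 / (4 * t) + 1) * heatK t x) := by ring
    _ ≤ Real.sqrt t * ((3 / 2) * heatK (2 * t) x) := by gcongr
    _ ≤ 2 * Real.sqrt t * heatK (2 * t) x := by nlinarith [mul_nonneg hs.le hq2]

lemma integrable_k2 {t : ℝ} (ht : 0 < t) : Integrable (k2 t) :=
  ((integrable_heatK (by positivity : 0 < 2 * t)).const_mul (6 / t)).mono'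
    (continuous_k2 t).aestronglyMeasurable (.of_forall fun x => abs_k2_le ht x)

/-- `q_t'` is dominated by a heat kernel of twice the variance. -/
lemma abs_k1_le {t : ℝ} (ht : 0 < t) (x : ℝ) :
    |k1 t x| ≤ 2 * Real.sqrt t / t * heatK (2 * t) x := by
  have h := abs_mul_heatK_le ht x
  unfold k1
  rw [abs_mul, abs_neg, abs_div, abs_of_pos ht, abs_of_nonneg (heatK_nonneg t x)]
  calc |x| / t * heatK t x = (|x| * heatK t x) / t := by ring
    _ ≤ (2 * Real.sqrt t * heatK (2 * t) x) / t := by gcongr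
    _ = _ := by ring

lemma integrable_k1 {t : ℝ} (ht : 0 < t) : Integrable (k1 t) :=
  ((integrable_heatK (by positivity : 0 < 2 * t)).const_mul _).mono'
    (continuous_k1 t).aestronglyMeasurable (.of_forall fun x => abs_k1_le ht x)

lemma heatK_le_const (t x : ℝ) (ht : 0 < t) : heatK t x ≤ 1 / Real.sqrt (2 * Real.pi * t) := by
  unfold heatK
  gcongr
  rw [Real.exp_le_one_iff, neg_div]
  have : 0 ≤ x ^ 2 / (2 * t) := by positivity
  linarith

lemma exists_abs_k1_le {t : ℝ} (ht : 0 < t) : ∃ N, 0 ≤ N ∧ ∀ x, |k1 t x| ≤ N :=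
  ⟨2 * Real.sqrt t / t * (1 / Real.sqrt (2 * Real.pi * (2 * t))), by positivity, fun x =>
    (abs_k1_le ht x).trans (by
      gcongr
      exact heatK_le_const _ _ (by positivity))⟩

/-- The heat kernel is Lipschitz in space. -/
lemma exists_lipschitz_heatK {t : ℝ} (ht : 0 < t) :
    ∃ N, 0 ≤ N ∧ ∀ x y, |heatK t x - heatK t y| ≤ N * |x - y| := by
  obtain ⟨N, hN, h⟩ := exists_abs_k1_le ht
  refine ⟨N, hN, fun x y => ?_⟩
  exact Convex.norm_image_sub_le_of_norm_hasDerivWithin_le (s := Set.univ)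
    (fun x _ => (hasDerivAt_heatK t x).hasDerivWithinAt) (fun x _ => h x) convex_univ
    (Set.mem_univ _) (Set.mem_univ _)

/-- Second moment of the heat kernel. -/
lemma integral_sq_mul_heatK {t : ℝ} (ht : 0 < t) :
    Integrable (fun x => x ^ 2 * heatK t x) ∧ ∫ x, x ^ 2 * heatK t x = t := by
  have hq := integrable_heatK ht
  have hk := integrable_k2 ht
  have e : (fun x => x ^ 2 * heatK t x) = fun x => t ^ 2 * k2 t x + t * heatK t x := by
    funext x; unfold k2; field_simp; ring
  have h0 : ∫ x, k2 t x = 0 :=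
    integral_eq_zero_of_hasDerivAt_of_integrable (hasDerivAt_k1 t) hk (integrable_k1 ht)
  rw [e]
  refine ⟨(hk.const_mul _).add (hq.const_mul _), ?_⟩
  rw [MeasureTheory.integral_add (hk.const_mul _) (hq.const_mul _), MeasureTheory.integral_const_mul, MeasureTheory.integral_const_mul, h0,
    integral_heatK ht]
  ring

lemma integral_k2_bound {t : ℝ} (ht : 0 < t) (y : ℝ) {c : ℝ → ℝ} {M : ℝ}
    (hM : ∀ x, |c x| ≤ M) : |∫ z, c z * k2 t (z - y)| ≤ 6 * M / t := by
  have hi : Integrable (fun z => M * (6 / t) * heatK (2 * t) (z - y)) :=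
    ((integrable_heatK (by positivity : 0 < 2 * t)).comp_sub_right y).const_mul _
  have := norm_integral_le_of_norm_le hi (f := fun z => c z * k2 t (z - y))
    (.of_forall fun z => by
      rw [Real.norm_eq_abs, abs_mul, mul_assoc]
      exact mul_le_mul (hM z) (abs_k2_le ht _) (abs_nonneg _) ((abs_nonneg _).trans (hM z)))
  rw [MeasureTheory.integral_const_mul, integral_heatK_sub (by positivity)] at this
  calc _ ≤ _ := this
    _ = _ := by ring

lemma integral_heatK_bound {t : ℝ} (ht : 0 < t) (y : ℝ) {c : ℝ → ℝ} {M : ℝ}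
    (hM : ∀ x, |c x| ≤ M) : |∫ z, c z * heatK t (z - y)| ≤ M := by
  have hi : Integrable (fun z => M * heatK t (z - y)) :=
    ((integrable_heatK ht).comp_sub_right y).const_mul _
  have := norm_integral_le_of_norm_le hi (f := fun z => c z * heatK t (z - y))
    (.of_forall fun z => by
      rw [Real.norm_eq_abs, abs_mul, abs_of_nonneg (heatK_nonneg _ _)]
      exact mul_le_mul_of_nonneg_right (hM z) (heatK_nonneg _ _))
  rw [MeasureTheory.integral_const_mul, integral_heatK_sub ht, mul_one] at this
  exact this

/-! ### Negativity of the second derivative and the heat semigroup -/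

lemma integral_k1_mul_k1 {v : ℝ} (hv : 0 < v) (y z : ℝ) :
    ∫ w, k1 v (y - w) * k1 v (z - w) = -k2 (2 * v) (z - y) := by
  -- completing the square
  have hq : ∀ w, heatK v (y - w) * heatK v (z - w)
      = heatK (2 * v) (z - y) * heatK (v / 2) (w - (y + z) / 2) := by
    intro w
    unfold heatK
    rw [div_mul_div_comm, div_mul_div_comm, ← Real.exp_add, ← Real.exp_add,
      ← Real.sqrt_mul (by positivity), ← Real.sqrt_mul (by positivity)]
    congr 2
    · field_simp; ring
    · ring
  have hi := integral_sq_mul_heatK (by positivity : 0 < v / 2)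
  have hi0 := integrable_heatK (by positivity : 0 < v / 2)
  have e : ∀ w, k1 v (y - w) * k1 v (z - w) = heatK (2 * v) (z - y) / v ^ 2 *
      ((w - (y + z) / 2) ^ 2 * heatK (v / 2) (w - (y + z) / 2)
        - (z - y) ^ 2 / 4 * heatK (v / 2) (w - (y + z) / 2)) := by
    intro w
    have : k1 v (y - w) * k1 v (z - w) = (y - w) * (z - w) / v ^ 2 *
        (heatK v (y - w) * heatK v (z - w)) := by unfold k1; ring
    rw [this, hq]; ring
  simp_rw [e]
  rw [MeasureTheory.integral_const_mul, integral_sub_right_eq_self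
    (fun r => r ^ 2 * heatK (v / 2) r - (z - y) ^ 2 / 4 * heatK (v / 2) r),
    MeasureTheory.integral_sub hi.1 (hi0.const_mul _), hi.2, MeasureTheory.integral_const_mul,
    integral_heatK (by positivity)]
  unfold k2
  field_simp
  ring

/-- Convolution-type integrands are integrable on the plane. -/
lemma integrable_mul_comp_sub {f k : ℝ → ℝ} (hf : Integrable f) (hk : Integrable k) :
    Integrable (fun p : ℝ × ℝ => f p.1 * k (p.2 - p.1)) (volume.prod volume) := by
  have := (hf.convolution_integrand (ContinuousLinearMap.mul ℝ ℝ) hk (μ := volume)).swap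
  simpa [Function.comp_def] using this

/-- The operator with kernel `q_u''` is negative semidefinite, because
`-q_u''(z - y) = ∫ q_{u/2}'(y - w) q_{u/2}'(z - w) dw` exhibits the quadratic form as minus an
integral of squares. -/
lemma quadForm_k2_nonpos {u : ℝ} (hu : 0 < u) {f : ℝ → ℝ} (hf : Integrable f) :
    ∫ y, f y * ∫ z, f z * k2 u (z - y) ≤ 0 := by
  obtain ⟨v, rfl⟩ : ∃ v, u = 2 * v := ⟨u / 2, by ring⟩
  have hv : 0 < v := by linarith
  obtain ⟨N, hN, hb⟩ := exists_abs_k1_le hv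
  have hk := integrable_k1 hv
  set g : ℝ → ℝ := fun w => ∫ z, f z * k1 v (z - w) with hg
  have hodd : ∀ x, k1 v (-x) = -k1 v x := by
    intro x; unfold k1; rw [heatK_neg]; ring
  have hgm : AEStronglyMeasurable g volume := by
    have := (integrable_mul_comp_sub hf hk).integral_prod_right
    refine (this.1.neg).congr (.of_forall fun w => ?_)
    simp only [hg, Pi.neg_apply, ← MeasureTheory.integral_neg]
    congr 1; funext z
    rw [← neg_sub z w, hodd]; ring
  have hgb : ∀ w, |g w| ≤ (∫ z, |f z|) * N := by
    intro w
    rw [← MeasureTheory.integral_mul_const]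
    refine norm_integral_le_of_norm_le (f := fun z => f z * k1 v (z - w)) (hf.abs.mul_const N)
      (.of_forall fun z => ?_)
    rw [Real.norm_eq_abs, abs_mul]
    exact mul_le_mul_of_nonneg_left (hb _) (abs_nonneg _)
  have step1 : ∀ y, ∫ z, f z * k2 (2 * v) (z - y) = -∫ w, k1 v (y - w) * g w := by
    intro y
    have : ∀ z, f z * k2 (2 * v) (z - y) = -∫ w, f z * (k1 v (y - w) * k1 v (z - w)) := by
      intro z
      rw [MeasureTheory.integral_const_mul, integral_k1_mul_k1 hv]; ring
    simp_rw [this]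
    rw [MeasureTheory.integral_neg, integral_integral_swap]
    · congr 1; congr 1; funext w
      rw [hg, ← MeasureTheory.integral_const_mul]
      congr 1; funext z; ring
    · have h1 : Integrable (fun p : ℝ × ℝ => f p.1 * k1 v (y - p.2)) (volume.prod volume) :=
        hf.mul_prod (hk.comp_sub_left y)
      have h2 := h1.bdd_mul (f := fun p : ℝ × ℝ => k1 v (p.1 - p.2)) (c := N)
        ((continuous_k1 v).comp (continuous_fst.sub continuous_snd)).aestronglyMeasurable
        (.of_forall fun p => hb _)
      refine h2.congr (.of_forall fun p => ?_)
      simp only [Function.uncurry]; ring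
  simp_rw [step1]
  have step2 : ∫ y, f y * -∫ w, k1 v (y - w) * g w = -∫ w, g w * g w := by
    simp_rw [mul_neg, MeasureTheory.integral_neg, ← MeasureTheory.integral_const_mul]
    rw [integral_integral_swap]
    · congr 1; congr 1; funext w
      rw [hg, ← MeasureTheory.integral_mul_const]
      congr 1; funext z; ring
    · have h1 := (integrable_mul_comp_sub hf hk).neg
      have h2 := h1.bdd_mul (f := fun p : ℝ × ℝ => g p.2) (c := (∫ z, |f z|) * N)
        hgm.comp_snd (.of_forall fun p => hgb _)
      refine h2.congr (.of_forall fun p => ?_)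
      simp only [Function.uncurry, Pi.neg_apply]
      rw [← neg_sub p.2 p.1, hodd]; ring
  rw [step2, neg_nonpos]
  exact integral_nonneg fun w => mul_self_nonneg _

/-- The heat semigroup applied to `c`, written as an integral against the kernel (for `u > 0`). -/
noncomputable def heatP (c : ℝ → ℝ) (u y : ℝ) : ℝ := ∫ z, c z * heatK u (z - y)

/-- `∂_y²` of the heat semigroup applied to `c`. -/
noncomputable def heatV (c : ℝ → ℝ) (u y : ℝ) : ℝ := ∫ z, c z * k2 u (z - y)

/-- The heat semigroup applied to `c`, rescaled so that it also makes sense (as the identity) at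
time `0`. -/
noncomputable def heatS (c : ℝ → ℝ) (u y : ℝ) : ℝ := ∫ z, c (y + Real.sqrt u * z) * heatK 1 z

lemma measurable_heatP {c : ℝ → ℝ → ℝ} (hc : Measurable (fun p : ℝ × ℝ => c p.1 p.2)) :
    Measurable (fun p : ℝ × ℝ × ℝ => heatP (c p.1) p.2.1 p.2.2) := by
  have h1 : Measurable (fun q : (ℝ × ℝ × ℝ) × ℝ => c q.1.1 q.2) :=
    Measurable.comp (g := fun p : ℝ × ℝ => c p.1 p.2) hc
      (f := fun q : (ℝ × ℝ × ℝ) × ℝ => (q.1.1, q.2)) (by fun_prop)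
  have h2 : Measurable (fun q : (ℝ × ℝ × ℝ) × ℝ => heatK q.1.2.1 (q.2 - q.1.2.2)) :=
    Measurable.comp (g := fun p : ℝ × ℝ => heatK p.1 p.2) measurable_heatK
      (f := fun q : (ℝ × ℝ × ℝ) × ℝ => (q.1.2.1, q.2 - q.1.2.2)) (by fun_prop)
  have h3 := (h1.mul h2).stronglyMeasurable.integral_prod_right' (ν := volume)
  exact h3.measurable

lemma measurable_heatV {c : ℝ → ℝ} (hc : Measurable c) :
    Measurable (fun p : ℝ × ℝ => heatV c p.1 p.2) := by
  have h1 : Measurable (fun q : (ℝ × ℝ) × ℝ => c q.2) := hc.comp measurable_snd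
  have h2 : Measurable (fun q : (ℝ × ℝ) × ℝ => k2 q.1.1 (q.2 - q.1.2)) :=
    Measurable.comp (g := fun p : ℝ × ℝ => k2 p.1 p.2) measurable_k2
      (f := fun q : (ℝ × ℝ) × ℝ => (q.1.1, q.2 - q.1.2)) (by fun_prop)
  have h3 := (h1.mul h2).stronglyMeasurable.integral_prod_right' (ν := volume)
  exact h3.measurable

lemma measurable_heatP' {c : ℝ → ℝ} (hc : Measurable c) (u : ℝ) : Measurable (heatP c u) := by
  have h := measurable_heatP (c := fun _ => c) (hc.comp measurable_snd)
  exact Measurable.comp (g := fun p : ℝ × ℝ × ℝ => heatP c p.2.1 p.2.2) h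
    (f := fun y : ℝ => ((0 : ℝ), u, y)) (by fun_prop)

lemma measurable_heatV' {c : ℝ → ℝ} (hc : Measurable c) (u : ℝ) : Measurable (heatV c u) :=
  Measurable.comp (g := fun p : ℝ × ℝ => heatV c p.1 p.2) (measurable_heatV hc)
    (f := fun y : ℝ => (u, y)) (by fun_prop)

lemma hasDerivAt_heatP {c : ℝ → ℝ} (hc : Measurable c) {M : ℝ} (hM : ∀ x, |c x| ≤ M)
    {u : ℝ} (hu : 0 < u) (y : ℝ) :
    HasDerivAt (fun u => heatP c u y) (heatV c u y / 2) u := by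
  have hM0 : 0 ≤ M := (abs_nonneg _).trans (hM 0)
  have hm : ∀ u, AEStronglyMeasurable (fun z => c z * heatK u (z - y)) volume := fun u =>
    (hc.mul ((continuous_heatK u).measurable.comp (measurable_id.sub_const y))).aestronglyMeasurable
  have hm2 : AEStronglyMeasurable (fun z => c z * (k2 u (z - y) / 2)) volume :=
    (hc.mul (((continuous_k2 u).measurable.comp
      (measurable_id.sub_const y)).div_const 2)).aestronglyMeasurable
  have key := hasDerivAt_integral_of_dominated_loc_of_deriv_le (μ := volume) (x₀ := u)
    (s := Set.Ioo (u / 2) (2 * u)) (F := fun u z => c z * heatK u (z - y))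
    (F' := fun u z => c z * (k2 u (z - y) / 2))
    (bound := fun z => M * (12 / u) * heatK (4 * u) (z - y))
    (Ioo_mem_nhds (by linarith) (by linarith)) (.of_forall hm) ?_ hm2 ?_ ?_ ?_
  · refine key.2.congr_deriv ?_
    unfold heatV
    rw [← MeasureTheory.integral_div]
    congr 1; funext z; ring
  · exact ((integrable_heatK hu).comp_sub_right y).bdd_mul hc.aestronglyMeasurable
      (.of_forall hM)
  · refine .of_forall fun z w hw => ?_
    have hw0 : 0 < w := by linarith [hw.1]
    rw [Real.norm_eq_abs, abs_mul, mul_assoc]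
    refine mul_le_mul (hM z) ?_ (abs_nonneg _) hM0
    rw [abs_div, abs_two]
    have h1 := abs_k2_le hw0 (z - y)
    have h2 := heatK_le_of_le (by positivity : 0 < 2 * w)
      (by linarith [hw.2] : 2 * w ≤ 4 * u) (by linarith [hw.1]) (z - y)
    have h3 : 6 / w ≤ 12 / u := by
      rw [div_le_div_iff₀ hw0 hu]; linarith [hw.1]
    have h4 := heatK_nonneg (2 * w) (z - y)
    have h5 : 0 ≤ 12 / u := by positivity
    calc |k2 w (z - y)| / 2 ≤ (6 / w * heatK (2 * w) (z - y)) / 2 := by gcongr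
      _ ≤ (12 / u * (2 * heatK (4 * u) (z - y))) / 2 := by gcongr
      _ = _ := by ring
  · exact ((integrable_heatK (by positivity)).comp_sub_right y).const_mul _
  · refine .of_forall fun z w hw => ?_
    exact (hasDerivAt_heatK_time (by linarith [hw.1]) (z - y)).const_mul (c z)

/-- Time derivative of `∫ ρ P_u c`. -/
lemma hasDerivAt_integral_heatP {c : ℝ → ℝ} (hc : Measurable c) {M : ℝ} (hM : ∀ x, |c x| ≤ M)
    {ρ : ℝ → ℝ} (hρ : Integrable ρ) {u : ℝ} (hu : 0 < u) :
    HasDerivAt (fun u => ∫ y, ρ y * heatP c u y) ((∫ y, ρ y * heatV c u y) / 2) u := by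
  have hM0 : 0 ≤ M := (abs_nonneg _).trans (hM 0)
  have key := hasDerivAt_integral_of_dominated_loc_of_deriv_le (μ := volume) (x₀ := u)
    (s := Set.Ioi (u / 2)) (F := fun u y => ρ y * heatP c u y)
    (F' := fun u y => ρ y * (heatV c u y / 2))
    (bound := fun y => |ρ y| * (6 * M / u))
    (Ioi_mem_nhds (by linarith))
    (.of_forall fun w => hρ.1.mul (measurable_heatP' hc w).aestronglyMeasurable) ?_
    (hρ.1.mul ((measurable_heatV' hc u).div_const 2).aestronglyMeasurable) ?_ ?_ ?_
  · refine key.2.congr_deriv ?_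
    rw [← MeasureTheory.integral_div]
    congr 1; funext z; ring
  · exact hρ.mul_bdd (measurable_heatP' hc u).aestronglyMeasurable
      (.of_forall fun y => integral_heatK_bound hu y hM)
  · refine .of_forall fun y w hw => ?_
    have hw' : u / 2 < w := hw
    have hw0 : 0 < w := by linarith
    rw [Real.norm_eq_abs, abs_mul, abs_div, abs_two]
    refine mul_le_mul_of_nonneg_left ?_ (abs_nonneg _)
    have h1 : |heatV c w y| ≤ 6 * M / w := integral_k2_bound hw0 y hM
    have h3 : 6 * M / w ≤ 6 * M / (u / 2) := by gcongr
    have h4 : 6 * M / (u / 2) = 2 * (6 * M / u) := by field_simp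
    linarith
  · exact hρ.abs.mul_const _
  · refine .of_forall fun y w hw => ?_
    have hw' : u / 2 < w := hw
    exact (hasDerivAt_heatP hc hM (by linarith) y).const_mul _

lemma heatP_eq_heatS (c : ℝ → ℝ) {u : ℝ} (hu : 0 < u) (y : ℝ) : heatP c u y = heatS c u y := by
  have hs : 0 < Real.sqrt u := Real.sqrt_pos.2 hu
  unfold heatP heatS
  have h1 := integral_sub_right_eq_self (fun z => c (z + y) * heatK u z) y (μ := volume)
  have h2 := Measure.integral_comp_mul_left (fun z => c (z + y) * heatK u z) (Real.sqrt u)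
  simp only [sub_add_cancel] at h1
  rw [h1]
  rw [abs_of_pos (inv_pos.2 hs), smul_eq_mul, eq_comm, inv_mul_eq_iff_eq_mul₀ hs.ne'] at h2
  rw [h2, ← MeasureTheory.integral_const_mul]
  congr 1; funext z
  rw [add_comm y]
  unfold heatK
  rw [show -(Real.sqrt u * z) ^ 2 / (2 * u) = -z ^ 2 / (2 * 1) by
    rw [mul_pow, Real.sq_sqrt hu.le]; field_simp,
    show 2 * Real.pi * u = u * (2 * Real.pi * 1) by ring, Real.sqrt_mul hu.le]
  field_simp

lemma heatS_zero (c : ℝ → ℝ) (y : ℝ) : heatS c 0 y = c y := by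
  unfold heatS
  simp [MeasureTheory.integral_const_mul, integral_heatK one_pos]

lemma abs_heatS_le {c : ℝ → ℝ} {M : ℝ} (hM : ∀ x, |c x| ≤ M) (u y : ℝ) : |heatS c u y| ≤ M := by
  unfold heatS
  have := norm_integral_le_of_norm_le ((integrable_heatK one_pos).const_mul M)
    (f := fun z => c (y + Real.sqrt u * z) * heatK 1 z)
    (.of_forall fun z => by
      rw [Real.norm_eq_abs, abs_mul, abs_of_nonneg (heatK_nonneg _ _)]
      exact mul_le_mul_of_nonneg_right (hM _) (heatK_nonneg _ _))
  rwa [MeasureTheory.integral_const_mul, integral_heatK one_pos, mul_one] at this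

lemma continuous_heatS {b : ℝ → ℝ} (hb : Continuous b) {B : ℝ} (hB : ∀ x, |b x| ≤ B) :
    Continuous (fun p : ℝ × ℝ => heatS b p.1 p.2) := by
  unfold heatS
  refine continuous_of_dominated (bound := fun z => B * heatK 1 z) (fun p => ?_) (fun p => ?_)
    ((integrable_heatK one_pos).const_mul B) (.of_forall fun z => by fun_prop)
  · have := continuous_heatK 1
    exact Continuous.aestronglyMeasurable (by fun_prop)
  · refine .of_forall fun z => ?_
    rw [Real.norm_eq_abs, abs_mul, abs_of_nonneg (heatK_nonneg _ _)]
    exact mul_le_mul_of_nonneg_right (hB _) (heatK_nonneg _ _)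

lemma continuous_integral_heatS {b : ℝ → ℝ} (hb : Continuous b) {B : ℝ} (hB : ∀ x, |b x| ≤ B)
    {ρ : ℝ → ℝ} (hρ : Integrable ρ) : Continuous (fun u => ∫ y, ρ y * heatS b u y) := by
  have h := continuous_heatS hb hB
  refine continuous_of_dominated (bound := fun y => |ρ y| * B) (fun u => ?_) (fun u => ?_)
    (hρ.abs.mul_const B) (.of_forall fun y => ?_)
  · exact hρ.1.mul (h.comp (by fun_prop : Continuous fun y : ℝ => (u, y))).aestronglyMeasurable
  · refine .of_forall fun y => ?_
    rw [Real.norm_eq_abs, abs_mul]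
    exact mul_le_mul_of_nonneg_left (abs_heatS_le hB _ _) (abs_nonneg _)
  · exact (h.comp (by fun_prop : Continuous fun u : ℝ => (u, y))).const_mul _

/-! ### The innermost time integral -/

/-- The pairing `∫ b(y) q_σ(y - x) ∂_y² (P_u b)(y) dy`, which is the innermost pair of spatial
integrals. -/
noncomputable def pairG (b : ℝ → ℝ) (σ u x : ℝ) : ℝ :=
  ∫ y, b y * heatK σ (y - x) * heatV b u y

lemma abs_mul_k2_le {u : ℝ} (hu : 0 < u) (x : ℝ) :
    |x| * |k2 u x| ≤ 24 / Real.sqrt u * heatK (4 * u) x := by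
  have hs : 0 < Real.sqrt u := Real.sqrt_pos.2 hu
  have h1 := abs_k2_le hu x
  have h2 := abs_mul_heatK_le (by positivity : 0 < 2 * u) x
  rw [show 2 * (2 * u) = 4 * u by ring] at h2
  have h3 : Real.sqrt (2 * u) ≤ 2 * Real.sqrt u := by
    rw [Real.sqrt_le_left (by positivity), mul_pow, Real.sq_sqrt hu.le]; linarith
  have h4 := heatK_nonneg (4 * u) x
  calc |x| * |k2 u x| ≤ |x| * (6 / u * heatK (2 * u) x) := by gcongr
    _ = 6 / u * (|x| * heatK (2 * u) x) := by ring
    _ ≤ 6 / u * (2 * Real.sqrt (2 * u) * heatK (4 * u) x) := by gcongr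
    _ ≤ 6 / u * (2 * (2 * Real.sqrt u) * heatK (4 * u) x) := by gcongr
    _ = 24 / (Real.sqrt u * Real.sqrt u) * Real.sqrt u * heatK (4 * u) x := by
      rw [Real.mul_self_sqrt hu.le]; ring
    _ = _ := by field_simp

/-- The Gaussian weight `q_σ` is a multiple of the square of `q_{2σ}`. -/
lemma heatK_eq_sq {σ : ℝ} (hσ : 0 < σ) (x : ℝ) :
    heatK σ x = 2 * Real.sqrt (2 * Real.pi * σ) * (heatK (2 * σ) x * heatK (2 * σ) x) := by
  unfold heatK
  have hp : 0 < 2 * Real.pi * σ := by have := Real.pi_pos; positivity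
  have hs : 0 < Real.sqrt (2 * Real.pi * σ) := Real.sqrt_pos.2 hp
  rw [div_mul_div_comm, ← Real.exp_add, Real.mul_self_sqrt (by positivity),
    show -x ^ 2 / (2 * (2 * σ)) + -x ^ 2 / (2 * (2 * σ)) = -x ^ 2 / (2 * σ) by field_simp; ring,
    show 2 * Real.pi * (2 * σ) = 2 * (Real.sqrt (2 * Real.pi * σ) * Real.sqrt (2 * Real.pi * σ)) by
      rw [Real.mul_self_sqrt hp.le]; ring]
  field_simp

/-- One-sided bound for the pairing. With `q_σ = A w²`, moving one factor `w` from `y` to the other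
variable produces the nonpositive quadratic form of `b w`, up to a commutator in which the Lipschitz
continuity of `w` removes half of the singularity of `q_u''`. -/
lemma exists_pairG_le {b : ℝ → ℝ} (hb : Continuous b) {B : ℝ} (hB : ∀ x, |b x| ≤ B)
    {σ : ℝ} (hσ : 0 < σ) : ∃ K, 0 ≤ K ∧ ∀ u x, 0 < u → pairG b σ u x ≤ K / Real.sqrt u := by
  have hB0 : 0 ≤ B := (abs_nonneg _).trans (hB 0)
  have h2σ : 0 < 2 * σ := by positivity
  obtain ⟨N, hN, hlip⟩ := exists_lipschitz_heatK h2σ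
  set A := 2 * Real.sqrt (2 * Real.pi * σ) with hA
  have hA0 : 0 ≤ A := by positivity
  refine ⟨A * (B * (24 * B * N)), by positivity, fun u x hu => ?_⟩
  have hs : 0 < Real.sqrt u := Real.sqrt_pos.2 hu
  set w : ℝ → ℝ := fun y => heatK (2 * σ) (y - x) with hw
  have hwc : Continuous w := (continuous_heatK _).comp (continuous_id.sub continuous_const)
  have hwi : Integrable w := (integrable_heatK h2σ).comp_sub_right x
  have hw0 : ∀ y, 0 ≤ w y := fun y => heatK_nonneg _ _
  set f : ℝ → ℝ := fun y => b y * w y with hf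
  have hfi : Integrable f := hwi.bdd_mul hb.aestronglyMeasurable (.of_forall hB)
  have hfc : Continuous f := hb.mul hwc
  have hfM : ∀ y, |f y| ≤ B * (1 / Real.sqrt (2 * Real.pi * (2 * σ))) := by
    intro y
    rw [hf, abs_mul, abs_of_nonneg (hw0 y)]
    exact mul_le_mul (hB y) (heatK_le_const _ _ h2σ) (hw0 y) hB0
  -- the commutator
  set R : ℝ → ℝ := fun y => w y * heatV b u y - heatV f u y with hR
  have hRb : ∀ y, |R y| ≤ 24 * B * N / Real.sqrt u := by
    intro y
    have hk : Integrable (fun z => k2 u (z - y)) := (integrable_k2 hu).comp_sub_right y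
    have e : R y = ∫ z, b z * (w y - w z) * k2 u (z - y) := by
      simp only [hR, heatV]
      rw [← MeasureTheory.integral_const_mul, ← MeasureTheory.integral_sub]
      · congr 1; funext z; simp only [hf]; ring
      · exact (hk.bdd_mul hb.aestronglyMeasurable (.of_forall hB)).const_mul _
      · exact hk.bdd_mul hfc.aestronglyMeasurable (.of_forall hfM)
    have hi : Integrable (fun z => B * N * (24 / Real.sqrt u) * heatK (4 * u) (z - y)) :=
      ((integrable_heatK (by positivity : 0 < 4 * u)).comp_sub_right y).const_mul _
    have h := norm_integral_le_of_norm_le hi (f := fun z => b z * (w y - w z) * k2 u (z - y))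
      (.of_forall fun z => by
        rw [Real.norm_eq_abs, abs_mul, abs_mul]
        have h1 : |w y - w z| ≤ N * |z - y| := by
          refine (hlip _ _).trans_eq ?_
          rw [sub_sub_sub_cancel_right, abs_sub_comm]
        have h2 := abs_mul_k2_le hu (z - y)
        calc |b z| * |w y - w z| * |k2 u (z - y)|
            ≤ B * (N * |z - y|) * |k2 u (z - y)| := by gcongr; exact hB z
          _ = B * N * (|z - y| * |k2 u (z - y)|) := by ring
          _ ≤ B * N * (24 / Real.sqrt u * heatK (4 * u) (z - y)) := by gcongr
          _ = _ := by ring)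
    rw [MeasureTheory.integral_const_mul, integral_heatK_sub (by positivity)] at h
    rw [e]
    calc _ ≤ _ := h
      _ = _ := by ring
  have hRm : AEStronglyMeasurable R volume :=
    ((hwc.measurable.mul (measurable_heatV' hb.measurable u)).sub
      (measurable_heatV' hfc.measurable u)).aestronglyMeasurable
  have i1 : Integrable (fun y => f y * heatV f u y) :=
    hfi.mul_bdd (measurable_heatV' hfc.measurable u).aestronglyMeasurable
      (.of_forall fun y => integral_k2_bound hu y hfM)
  have i2 : Integrable (fun y => f y * R y) := hfi.mul_bdd hRm (.of_forall hRb)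
  have e : pairG b σ u x = A * ((∫ y, f y * heatV f u y) + ∫ y, f y * R y) := by
    rw [← MeasureTheory.integral_add i1 i2, ← MeasureTheory.integral_const_mul]
    unfold pairG
    congr 1; funext y
    rw [heatK_eq_sq hσ]
    simp only [hR, hf, hw, hA]
    ring
  have hneg : ∫ y, f y * heatV f u y ≤ 0 := quadForm_k2_nonpos hu hfi
  have hR2 : ∫ y, f y * R y ≤ B * (24 * B * N / Real.sqrt u) := by
    have hi : Integrable (fun y => B * (24 * B * N / Real.sqrt u) * w y) := hwi.const_mul _
    have h := norm_integral_le_of_norm_le hi (f := fun y => f y * R y)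
      (.of_forall fun y => by
        rw [Real.norm_eq_abs, abs_mul, hf, abs_mul, abs_of_nonneg (hw0 y)]
        have := hw0 y
        calc |b y| * w y * |R y| ≤ B * w y * (24 * B * N / Real.sqrt u) := by
              gcongr
              · exact hB y
              · exact hRb y
          _ = _ := by ring)
    rw [MeasureTheory.integral_const_mul, hw, integral_heatK_sub h2σ, mul_one] at h
    exact (le_abs_self _).trans h
  rw [e]
  calc A * ((∫ y, f y * heatV f u y) + ∫ y, f y * R y)
      ≤ A * (0 + B * (24 * B * N / Real.sqrt u)) := by gcongr
    _ = _ := by ring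

lemma integral_inv_sqrt {T : ℝ} (hT : 0 ≤ T) (K : ℝ) :
    IntervalIntegrable (fun u => K / Real.sqrt u) volume 0 T ∧
      ∫ u in (0 : ℝ)..T, K / Real.sqrt u = 2 * K * Real.sqrt T := by
  have e : ∀ u ∈ Set.uIoc 0 T, K * u ^ (-(1 / 2) : ℝ) = K / Real.sqrt u := by
    intro u hu
    rw [Set.uIoc_of_le hT] at hu
    rw [Real.sqrt_eq_rpow, Real.rpow_neg hu.1.le, div_eq_mul_inv K]
  have h1 : IntervalIntegrable (fun u : ℝ => K * u ^ (-(1 / 2) : ℝ)) volume 0 T :=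
    (intervalIntegrable_rpow' (by norm_num)).const_mul K
  refine ⟨h1.congr e, ?_⟩
  rw [← intervalIntegral.integral_congr_ae (.of_forall e), intervalIntegral.integral_const_mul,
    integral_rpow (Or.inl (by norm_num)), Real.sqrt_eq_rpow]
  norm_num
  ring

/-- Absolute integrability in time of the pairing, down to the singular time, together with its
value: a one-sided bound on the derivative of a continuous function suffices. -/
lemma exists_pairG_integral {b : ℝ → ℝ} (hb : Continuous b) {B : ℝ} (hB : ∀ x, |b x| ≤ B)
    {σ T : ℝ} (hσ : 0 < σ) (hT : 0 ≤ T) : ∃ C, ∀ x,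
      IntervalIntegrable (fun u => pairG b σ u x) volume 0 T ∧
      ∫ u in (0 : ℝ)..T, |pairG b σ u x| ≤ C ∧
      ∫ u in (0 : ℝ)..T, pairG b σ u x
        = ∫ y, 2 * b y * (heatS b T y - b y) * heatK σ (y - x) := by
  have hB0 : 0 ≤ B := (abs_nonneg _).trans (hB 0)
  obtain ⟨K, hK, hle⟩ := exists_pairG_le hb hB hσ
  refine ⟨4 * K * Real.sqrt T + 4 * B ^ 2, fun x => ?_⟩
  set ρ : ℝ → ℝ := fun y => b y * heatK σ (y - x) with hρ
  have hρi : Integrable ρ :=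
    ((integrable_heatK hσ).comp_sub_right x).bdd_mul hb.aestronglyMeasurable (.of_forall hB)
  set Φ : ℝ → ℝ := fun u => ∫ y, ρ y * heatS b u y with hΦ
  have hΦc : Continuous Φ := continuous_integral_heatS hb hB hρi
  have hΦb : ∀ u, |Φ u| ≤ B ^ 2 := by
    intro u
    have hi : Integrable (fun y => B ^ 2 * heatK σ (y - x)) :=
      ((integrable_heatK hσ).comp_sub_right x).const_mul _
    have h := norm_integral_le_of_norm_le hi (f := fun y => ρ y * heatS b u y)
      (.of_forall fun y => by
        have h0 := heatK_nonneg σ (y - x)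
        rw [Real.norm_eq_abs, abs_mul, hρ, abs_mul, abs_of_nonneg h0]
        calc |b y| * heatK σ (y - x) * |heatS b u y| ≤ B * heatK σ (y - x) * B := by
              gcongr
              · exact hB y
              · exact abs_heatS_le hB _ _
          _ = _ := by ring)
    rwa [MeasureTheory.integral_const_mul, integral_heatK_sub hσ, mul_one] at h
  have hΦd : ∀ u, 0 < u → HasDerivAt (fun u => 2 * Φ u) (pairG b σ u x) u := by
    intro u hu
    have h := (hasDerivAt_integral_heatP hb.measurable hB hρi hu).const_mul 2
    have h' : HasDerivAt (fun u => 2 * Φ u) (2 * ((∫ y, ρ y * heatV b u y) / 2)) u := by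
      refine h.congr_of_eventuallyEq ?_
      filter_upwards [lt_mem_nhds hu] with v hv
      simp only [hΦ, heatP_eq_heatS b hv]
    refine h'.congr_deriv ?_
    rw [mul_div_cancel₀ _ two_ne_zero]; rfl
  obtain ⟨hs1, hs2⟩ := integral_inv_sqrt hT K
  have hint : IntervalIntegrable (fun u => K / Real.sqrt u - pairG b σ u x) volume 0 T := by
    rw [intervalIntegrable_iff_integrableOn_Ioc_of_le hT]
    refine intervalIntegral.integrableOn_deriv_of_nonneg
      (g := fun u => K * (2 * Real.sqrt u) - 2 * Φ u) ?_ ?_ ?_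
    · exact ((continuous_const.mul (continuous_const.mul Real.continuous_sqrt)).sub
        (continuous_const.mul hΦc)).continuousOn
    · intro u hu
      refine HasDerivAt.sub ?_ (hΦd u hu.1)
      refine (((Real.hasDerivAt_sqrt hu.1.ne').const_mul 2).const_mul K).congr_deriv ?_
      have : Real.sqrt u ≠ 0 := (Real.sqrt_pos.2 hu.1).ne'
      field_simp
    · intro u hu
      exact sub_nonneg.2 (hle u x hu.1)
  have hG : IntervalIntegrable (fun u => pairG b σ u x) volume 0 T := by
    have := hs1.sub hint
    simpa using this
  have hval : ∫ u in (0 : ℝ)..T, pairG b σ u x = 2 * Φ T - 2 * Φ 0 :=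
    intervalIntegral.integral_eq_sub_of_hasDerivAt_of_le hT
      (continuous_const.mul hΦc).continuousOn (fun u hu => hΦd u hu.1) hG
  refine ⟨hG, ?_, ?_⟩
  · have h1 : ∫ u in (0 : ℝ)..T, |pairG b σ u x|
        ≤ ∫ u in (0 : ℝ)..T, (2 * (K / Real.sqrt u) - pairG b σ u x) := by
      refine intervalIntegral.integral_mono_on_of_le_Ioo hT hG.abs ((hs1.const_mul 2).sub hG) ?_
      intro u hu
      have h := hle u x hu.1
      have h0 : 0 ≤ K / Real.sqrt u := by positivity
      rw [abs_le]; constructor <;> linarith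
    rw [intervalIntegral.integral_sub (hs1.const_mul 2) hG, intervalIntegral.integral_const_mul,
      hs2, hval] at h1
    have a1 := abs_le.1 (hΦb T)
    have a2 := abs_le.1 (hΦb 0)
    linarith
  · have hi : ∀ u, Integrable (fun y => ρ y * heatS b u y) := fun u =>
      hρi.mul_bdd ((continuous_heatS hb hB).comp
        (by fun_prop : Continuous fun y : ℝ => (u, y))).aestronglyMeasurable
        (.of_forall fun y => abs_heatS_le hB u y)
    rw [hval, ← mul_sub, hΦ]
    simp only
    rw [← MeasureTheory.integral_sub (hi T) (hi 0), ← MeasureTheory.integral_const_mul]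
    congr 1; funext y
    rw [heatS_zero]
    simp only [hρ]; ring

lemma measurable_pairG {b : ℝ → ℝ} (hb : Measurable b) (σ : ℝ) :
    Measurable (fun p : ℝ × ℝ => pairG b σ p.1 p.2) := by
  have h1 : Measurable (fun q : (ℝ × ℝ) × ℝ => b q.2) := hb.comp measurable_snd
  have h2 : Measurable (fun q : (ℝ × ℝ) × ℝ => heatK σ (q.2 - q.1.2)) :=
    Measurable.comp (g := heatK σ) (continuous_heatK σ).measurable
      (f := fun q : (ℝ × ℝ) × ℝ => q.2 - q.1.2) (by fun_prop)
  have h4 : Measurable (fun q : (ℝ × ℝ) × ℝ => heatV b q.1.1 q.2) :=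
    Measurable.comp (g := fun p : ℝ × ℝ => heatV b p.1 p.2) (measurable_heatV hb)
      (f := fun q : (ℝ × ℝ) × ℝ => (q.1.1, q.2)) (by fun_prop)
  exact ((h1.mul h2).mul h4).stronglyMeasurable.integral_prod_right' (ν := volume) |>.measurable

/-- Fubini for the weight `ρ(y) q_τ''(z - y)` on the plane against a time integral. -/
lemma integral_swap_time {ρ b : ℝ → ℝ} (hρ : Integrable ρ) (hb : Continuous b) {B : ℝ}
    (hB : ∀ x, |b x| ≤ B) {τ : ℝ} (hτ : 0 < τ) {h : ℝ → ℝ → ℝ}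
    (hm : Measurable (fun p : ℝ × ℝ => h p.1 p.2)) {a t C : ℝ} (hat : a ≤ t)
    (hi : ∀ y, IntervalIntegrable (fun r => h r y) volume a t)
    (hC : ∀ y, ∫ r in a..t, |h r y| ≤ C) :
    ∫ r in a..t, ∫ y, ρ y * heatV (fun z => b z * h r z) τ y
      = ∫ y, ρ y * heatV (fun z => b z * ∫ r in a..t, h r z) τ y := by
  set κ : ℝ × ℝ → ℝ := fun p => b p.2 * (ρ p.1 * k2 τ (p.2 - p.1)) with hκ
  have hκi : Integrable κ (volume.prod volume) :=
    (integrable_mul_comp_sub hρ (integrable_k2 hτ)).bdd_mul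
      (hb.comp continuous_snd).aestronglyMeasurable (.of_forall fun p => hB p.2)
  have hpull : ∀ g : ℝ → ℝ, Integrable (fun p : ℝ × ℝ => κ p * g p.2) (volume.prod volume) →
      ∫ y, ρ y * heatV (fun z => b z * g z) τ y = ∫ p, κ p * g p.2 ∂(volume.prod volume) := by
    intro g hg
    rw [integral_prod _ hg]
    congr 1; funext y
    unfold heatV
    rw [← MeasureTheory.integral_const_mul]
    congr 1; funext z
    simp only [hκ]; ring
  simp only [intervalIntegral.integral_of_le hat] at *
  set μ := (volume : Measure ℝ).restrict (Set.Ioc a t)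
  have hi' : ∀ y, Integrable (fun r => h r y) μ := fun y =>
    (intervalIntegrable_iff_integrableOn_Ioc_of_le hat).1 (hi y)
  have hmp : Measurable (fun q : (ℝ × ℝ) × ℝ => h q.2 q.1.2) :=
    Measurable.comp (g := fun p : ℝ × ℝ => h p.1 p.2) hm
      (f := fun q : (ℝ × ℝ) × ℝ => (q.2, q.1.2)) (by fun_prop)
  have hFm : AEStronglyMeasurable (fun q : (ℝ × ℝ) × ℝ => κ q.1 * h q.2 q.1.2)
      ((volume.prod volume).prod μ) := hκi.1.comp_fst.mul hmp.aestronglyMeasurable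
  have hswapm : Measurable (fun p : ℝ × ℝ => h p.2 p.1) := hm.comp measurable_swap
  have hF : Integrable (fun q : (ℝ × ℝ) × ℝ => κ q.1 * h q.2 q.1.2)
      ((volume.prod volume).prod μ) := by
    rw [integrable_prod_iff hFm]
    refine ⟨.of_forall fun p => (hi' p.2).const_mul (κ p), ?_⟩
    simp only [norm_mul, MeasureTheory.integral_const_mul]
    refine hκi.norm.mul_bdd (c := C) ?_ (.of_forall fun p => ?_)
    · have := (hswapm.norm.stronglyMeasurable.integral_prod_right' (ν := μ)).measurable
      exact (this.comp measurable_snd).aestronglyMeasurable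
    · rw [Real.norm_eq_abs, abs_of_nonneg (integral_nonneg fun _ => norm_nonneg _)]
      exact hC p.2
  have hH : Measurable (fun z => ∫ r, h r z ∂μ) :=
    (hswapm.stronglyMeasurable.integral_prod_right' (ν := μ)).measurable
  rw [hpull]
  · have hL : ∫ r, (∫ y, ρ y * heatV (fun z => b z * h r z) τ y) ∂μ
        = ∫ r, (∫ p, κ p * h r p.2 ∂(volume.prod volume)) ∂μ := by
      refine integral_congr_ae ?_
      filter_upwards [hF.prod_left_ae] with r hr
      exact hpull (h r) hr
    rw [hL, ← integral_integral_swap (f := fun (p : ℝ × ℝ) r => κ p * h r p.2) hF]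
    simp only [MeasureTheory.integral_const_mul]
  · refine hκi.mul_bdd (c := C) (hH.comp measurable_snd).aestronglyMeasurable
      (.of_forall fun p => ?_)
    exact (MeasureTheory.norm_integral_le_integral_norm _).trans (hC p.2)

/-! ### The backward heat equation and the outer time integrals -/

lemma heatK_of_nonpos {t : ℝ} (ht : t ≤ 0) (x : ℝ) : heatK t x = 0 := by
  unfold heatK
  rw [Real.sqrt_eq_zero_of_nonpos (mul_nonpos_of_nonneg_of_nonpos (by positivity) ht), div_zero]

lemma abs_heatP_le {c : ℝ → ℝ} {M : ℝ} (hM : ∀ x, |c x| ≤ M) (u y : ℝ) : |heatP c u y| ≤ M := by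
  rcases lt_or_ge 0 u with hu | hu
  · exact integral_heatK_bound hu y hM
  · unfold heatP
    simp only [heatK_of_nonpos hu, mul_zero, integral_zero, abs_zero]
    exact (abs_nonneg _).trans (hM 0)

lemma intervalIntegrable_of_abs_le {f : ℝ → ℝ} (hf : Measurable f) {a t C : ℝ} (hat : a ≤ t)
    (hC : ∀ r ∈ Set.Ioc a t, |f r| ≤ C) : IntervalIntegrable f volume a t := by
  rw [intervalIntegrable_iff_integrableOn_Ioc_of_le hat]
  refine IntegrableOn.of_bound (by simp) hf.aestronglyMeasurable C ?_
  exact (ae_restrict_iff' measurableSet_Ioc).2 (.of_forall hC)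

/-- Time regularity of the heat semigroup, of order `1/2` and blowing up only like `a^{-1/2}`. -/
lemma abs_heatP_sub_le {c : ℝ → ℝ} (hc : Measurable c) {M : ℝ} (hM : ∀ x, |c x| ≤ M)
    {a δ : ℝ} (ha : 0 < a) (hδ : 0 ≤ δ) (x : ℝ) :
    |heatP c (a + δ) x - heatP c a x| ≤ 3 * M * Real.sqrt δ / Real.sqrt a := by
  have hM0 : 0 ≤ M := (abs_nonneg _).trans (hM 0)
  have hsa : 0 < Real.sqrt a := Real.sqrt_pos.2 ha
  rcases le_total δ a with h | h
  · have h1 : |heatP c (a + δ) x - heatP c a x| ≤ 3 * M / a * |a + δ - a| := by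
      refine Convex.norm_image_sub_le_of_norm_hasDerivWithin_le (s := Set.Icc a (a + δ))
        (f := fun u => heatP c u x) (f' := fun u => heatV c u x / 2)
        (fun u hu => (hasDerivAt_heatP hc hM (ha.trans_le hu.1) x).hasDerivWithinAt) ?_
        (convex_Icc _ _) (Set.left_mem_Icc.2 (by linarith)) (Set.right_mem_Icc.2 (by linarith))
      intro u hu
      have hu0 : 0 < u := ha.trans_le hu.1
      have h2 : |heatV c u x| ≤ 6 * M / u := integral_k2_bound hu0 x hM
      have h3 : 6 * M / u ≤ 6 * M / a := by gcongr; exact hu.1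
      rw [Real.norm_eq_abs, abs_div, abs_two, div_le_iff₀ two_pos]
      calc _ ≤ _ := h2.trans h3
        _ = _ := by ring
    refine h1.trans ?_
    rw [add_sub_cancel_left, abs_of_nonneg hδ, div_mul_eq_mul_div, div_le_div_iff₀ ha hsa]
    have h4 : Real.sqrt δ ≤ Real.sqrt a := Real.sqrt_le_sqrt h
    have e1 := Real.mul_self_sqrt hδ
    have e2 := Real.mul_self_sqrt ha.le
    have h5 : δ * Real.sqrt a ≤ Real.sqrt δ * a := by
      calc δ * Real.sqrt a = Real.sqrt δ * Real.sqrt a * Real.sqrt δ := by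
            nth_rw 1 [← e1]; ring
        _ ≤ Real.sqrt δ * Real.sqrt a * Real.sqrt a := by gcongr
        _ = Real.sqrt δ * a := by rw [mul_assoc, e2]
    calc 3 * M * δ * Real.sqrt a = 3 * M * (δ * Real.sqrt a) := by ring
      _ ≤ 3 * M * (Real.sqrt δ * a) := by gcongr
      _ = _ := by ring
  · have h4 : Real.sqrt a ≤ Real.sqrt δ := Real.sqrt_le_sqrt h
    rw [le_div_iff₀ hsa]
    have h1 := abs_sub (heatP c (a + δ) x) (heatP c a x)
    have h2 := abs_heatP_le hM (a + δ) x
    have h3 := abs_heatP_le hM a x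
    have h5 : |heatP c (a + δ) x - heatP c a x| ≤ 3 * M := by linarith
    exact mul_le_mul h5 h4 hsa.le (by positivity)

/-- The solution of the backward heat equation with source `-c` and terminal value `0` at
time `t`. -/
noncomputable def backD (c : ℝ → ℝ → ℝ) (t s x : ℝ) : ℝ := ∫ r in s..t, heatP (c r) (r - s) x

section Source

variable {c : ℝ → ℝ → ℝ} {M t : ℝ}

lemma measurable_heatP_diag (hc : Measurable (fun p : ℝ × ℝ => c p.1 p.2)) (s : ℝ) :
    Measurable (fun p : ℝ × ℝ => heatP (c p.1) (p.1 - s) p.2) :=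
  Measurable.comp (g := fun p : ℝ × ℝ × ℝ => heatP (c p.1) p.2.1 p.2.2) (measurable_heatP hc)
    (f := fun p : ℝ × ℝ => (p.1, p.1 - s, p.2)) (by fun_prop)

lemma intervalIntegrable_heatP (hc : Measurable (fun p : ℝ × ℝ => c p.1 p.2))
    (hM : ∀ s x, |c s x| ≤ M) (s x : ℝ) {a e : ℝ} (hae : a ≤ e) :
    IntervalIntegrable (fun r => heatP (c r) (r - s) x) volume a e :=
  intervalIntegrable_of_abs_le (C := M)
    (Measurable.comp (g := fun p : ℝ × ℝ => heatP (c p.1) (p.1 - s) p.2)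
      (measurable_heatP_diag hc s) (f := fun r : ℝ => (r, x)) (by fun_prop)) hae
    fun r _ => abs_heatP_le (hM r) _ _

lemma measurable_backD (hc : Measurable (fun p : ℝ × ℝ => c p.1 p.2)) {s : ℝ} (hst : s ≤ t) :
    Measurable (backD c t s) := by
  unfold backD
  simp only [intervalIntegral.integral_of_le hst]
  have h := (measurable_heatP_diag hc s).comp measurable_swap
  exact (h.stronglyMeasurable.integral_prod_right'
    (ν := (volume : Measure ℝ).restrict (Set.Ioc s t))).measurable

lemma abs_backD_le (hM : ∀ s x, |c s x| ≤ M) {s : ℝ} (hst : s ≤ t) (x : ℝ) :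
    |backD c t s x| ≤ M * (t - s) := by
  have h := intervalIntegral.norm_integral_le_of_norm_le_const (a := s) (b := t) (C := M)
    (f := fun r => heatP (c r) (r - s) x) fun r _ => abs_heatP_le (hM r) _ _
  rwa [abs_of_nonneg (sub_nonneg.2 hst)] at h

/-- Hölder continuity in time of the backward solution, of order `1/2`. -/
lemma abs_backD_sub_le (hc : Measurable (fun p : ℝ × ℝ => c p.1 p.2)) (hM : ∀ s x, |c s x| ≤ M)
    {s s' : ℝ} (hs : s ≤ s') (hst : s' ≤ t) (x : ℝ) :
    |backD c t s' x - backD c t s x| ≤ 7 * M * Real.sqrt (t - s) * Real.sqrt (s' - s) := by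
  have hM0 : 0 ≤ M := (abs_nonneg _).trans (hM 0 0)
  have e : backD c t s' x - backD c t s x
      = -(∫ r in s'..t, (heatP (c r) (r - s) x - heatP (c r) (r - s') x))
        - ∫ r in s..s', heatP (c r) (r - s) x := by
    unfold backD
    rw [← intervalIntegral.integral_add_adjacent_intervals
      (intervalIntegrable_heatP hc hM s x hs) (intervalIntegrable_heatP hc hM s x hst),
      intervalIntegral.integral_sub (intervalIntegrable_heatP hc hM s x hst)
        (intervalIntegrable_heatP hc hM s' x hst)]
    ring
  have h1 : |∫ r in s..s', heatP (c r) (r - s) x| ≤ M * (s' - s) := by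
    have h := intervalIntegral.norm_integral_le_of_norm_le_const (a := s) (b := s') (C := M)
      (f := fun r => heatP (c r) (r - s) x) fun r _ => abs_heatP_le (hM r) _ _
    rwa [abs_of_nonneg (sub_nonneg.2 hs)] at h
  have hi := integral_inv_sqrt (sub_nonneg.2 hst) (3 * M * Real.sqrt (s' - s))
  have hi1 : IntervalIntegrable (fun r => 3 * M * Real.sqrt (s' - s) / Real.sqrt (r - s'))
      volume s' t := by
    have := hi.1.comp_sub_right s'
    simpa using this
  have hi2 : ∫ r in s'..t, 3 * M * Real.sqrt (s' - s) / Real.sqrt (r - s')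
      = 2 * (3 * M * Real.sqrt (s' - s)) * Real.sqrt (t - s') := by
    rw [← hi.2, intervalIntegral.integral_comp_sub_right
      (fun r => 3 * M * Real.sqrt (s' - s) / Real.sqrt r) s', sub_self]
  have h2 : |∫ r in s'..t, (heatP (c r) (r - s) x - heatP (c r) (r - s') x)|
      ≤ 2 * (3 * M * Real.sqrt (s' - s)) * Real.sqrt (t - s') := by
    rw [← hi2]
    refine intervalIntegral.norm_integral_le_of_norm_le
      (f := fun r => heatP (c r) (r - s) x - heatP (c r) (r - s') x) hst
      (.of_forall fun r hr => ?_) hi1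
    have h := abs_heatP_sub_le (c := c r) (hc.comp (by fun_prop : Measurable fun y : ℝ => (r, y)))
      (hM r) (sub_pos.2 hr.1) (sub_nonneg.2 hs) x
    rwa [show r - s' + (s' - s) = r - s by ring] at h
  have h3 : Real.sqrt (t - s') ≤ Real.sqrt (t - s) := Real.sqrt_le_sqrt (by linarith)
  have h4 : s' - s ≤ Real.sqrt (t - s) * Real.sqrt (s' - s) := by
    calc s' - s = Real.sqrt (s' - s) * Real.sqrt (s' - s) :=
          (Real.mul_self_sqrt (sub_nonneg.2 hs)).symm
      _ ≤ _ := by gcongr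
  rw [e]
  calc _ ≤ |∫ r in s'..t, (heatP (c r) (r - s) x - heatP (c r) (r - s') x)|
        + |∫ r in s..s', heatP (c r) (r - s) x| := by
        refine (abs_sub _ _).trans ?_
        rw [abs_neg]
    _ ≤ 2 * (3 * M * Real.sqrt (s' - s)) * Real.sqrt (t - s')
        + M * (s' - s) := add_le_add h2 h1
    _ ≤ 2 * (3 * M * Real.sqrt (s' - s)) * Real.sqrt (t - s)
        + M * (Real.sqrt (t - s) * Real.sqrt (s' - s)) := by gcongr
    _ = _ := by ring

end Source

/-- If `K` differs from the derivative of a bounded function by an inverse square root, its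
integral is controlled. (If `K` is not integrable, its Bochner integral is `0`.) -/
lemma abs_integral_le_of_near_deriv {K Ψ Ψ' : ℝ → ℝ} {a t L P Q : ℝ} (hat : a < t) (hL : 0 ≤ L)
    (hQ : 0 ≤ Q) (hΨ : ∀ r ∈ Set.Ioc a t, HasDerivAt Ψ (Ψ' r) r)
    (hP : ∀ r ∈ Set.Ioc a t, |Ψ r| ≤ P)
    (hm : Measurable Ψ') (hQb : ∀ r ∈ Set.Ioc a t, |Ψ' r| ≤ Q / (r - a))
    (hK : ∀ r ∈ Set.Ioc a t, |K r - Ψ' r| ≤ L / Real.sqrt (r - a)) :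
    |∫ r in a..t, K r| ≤ 2 * L * Real.sqrt (t - a) + 2 * P := by
  have hP0 : 0 ≤ P := (abs_nonneg _).trans (hP t ⟨hat, le_rfl⟩)
  by_cases hint : IntervalIntegrable K volume a t
  swap
  · rw [intervalIntegral.integral_undef hint, abs_zero]; positivity
  have hi := integral_inv_sqrt (sub_pos.2 hat).le L
  have hi1 : IntervalIntegrable (fun r => L / Real.sqrt (r - a)) volume a t := by
    have := hi.1.comp_sub_right a
    simpa using this
  have hi2 : ∫ r in a..t, L / Real.sqrt (r - a) = 2 * L * Real.sqrt (t - a) := by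
    rw [← hi.2, intervalIntegral.integral_comp_sub_right (fun r => L / Real.sqrt r) a, sub_self]
  have hbound : ∀ e ∈ Set.Ioc a t, |∫ r in e..t, K r| ≤ 2 * L * Real.sqrt (t - a) + 2 * P := by
    intro e he
    have hsub : Set.uIcc e t ⊆ Set.uIcc a t := by
      rw [Set.uIcc_of_le he.2, Set.uIcc_of_le hat.le]
      exact Set.Icc_subset_Icc_left he.1.le
    have hKe := hint.mono_set hsub
    have hΨe : IntervalIntegrable Ψ' volume e t := by
      refine intervalIntegrable_of_abs_le hm he.2 (C := Q / (e - a)) fun r hr => ?_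
      refine (hQb r ⟨he.1.trans hr.1, hr.2⟩).trans ?_
      have := sub_pos.2 he.1
      gcongr
      exact hr.1.le
    have h1 : ∫ r in e..t, Ψ' r = Ψ t - Ψ e := by
      refine intervalIntegral.integral_eq_sub_of_hasDerivAt (fun r hr => hΨ r ?_) hΨe
      rw [Set.uIcc_of_le he.2] at hr
      exact ⟨he.1.trans_le hr.1, hr.2⟩
    have h2 : |∫ r in e..t, (K r - Ψ' r)| ≤ 2 * L * Real.sqrt (t - a) := by
      rw [← hi2]
      have h3 := intervalIntegral.norm_integral_le_of_norm_le (f := fun r => K r - Ψ' r) he.2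
        (.of_forall fun r hr => hK r ⟨he.1.trans hr.1, hr.2⟩) (hi1.mono_set hsub)
      refine h3.trans ?_
      exact intervalIntegral.integral_mono_interval he.1.le he.2 le_rfl
        (.of_forall fun r => by positivity) hi1
    rw [intervalIntegral.integral_sub hKe hΨe, h1] at h2
    have h4 := abs_le.1 (hP t ⟨hat, le_rfl⟩)
    have h5 := abs_le.1 (hP e he)
    have h6 := abs_le.1 h2
    rw [abs_le]; constructor <;> linarith
  have hcont := intervalIntegral.continuousOn_primitive_interval_left (μ := volume) (a := a)
    (b := t) (f := K) ((intervalIntegrable_iff' ).1 hint)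
  have hc : ContinuousWithinAt (fun x => |∫ r in x..t, K r|) (Set.Ioc a t) a := by
    refine ((hcont a Set.left_mem_uIcc).mono ?_).abs
    rw [Set.uIcc_of_le hat.le]; exact Set.Ioc_subset_Icc_self
  have : (nhdsWithin a (Set.Ioc a t)).NeBot := by
    rw [nhdsWithin_Ioc_eq_nhdsGT hat]; infer_instance
  exact le_of_tendsto hc (Filter.eventually_of_mem self_mem_nhdsWithin hbound)

section Main

variable {b : ℝ → ℝ} {B : ℝ}

/-- The two outer time integrals: comparing `D(s₂, ·)` with `D(s₁, ·)` gains `√(s₂ - s₁)`, and for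
the frozen function the heat equation integrates the singularity exactly. -/
lemma abs_integral_backD_le (hb : Continuous b) (hB : ∀ x, |b x| ≤ B)
    {c : ℝ → ℝ → ℝ} {M : ℝ} (hc : Measurable (fun p : ℝ × ℝ => c p.1 p.2))
    (hM : ∀ s x, |c s x| ≤ M) {s t : ℝ} (hs : 0 < s) (hst : s < t) :
    |∫ r in s..t, ∫ y, b y * heatK s y * heatV (fun z => b z * backD c t r z) (r - s) y|
      ≤ 88 * B ^ 2 * M * (t - s) := by
  have hB0 : 0 ≤ B := (abs_nonneg _).trans (hB 0)
  have hM0 : 0 ≤ M := (abs_nonneg _).trans (hM 0 0)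
  have hts : 0 < t - s := sub_pos.2 hst
  set ρ : ℝ → ℝ := fun y => b y * heatK s y with hρ
  have hρi : Integrable ρ :=
    (integrable_heatK hs).bdd_mul hb.aestronglyMeasurable (.of_forall hB)
  have hρc : Continuous ρ := hb.mul (continuous_heatK s)
  -- testing against `ρ` costs a factor `B`
  have htest : ∀ (g : ℝ → ℝ) (C : ℝ), (∀ y, |g y| ≤ C) → |∫ y, ρ y * g y| ≤ B * C := by
    intro g C hg
    have h := norm_integral_le_of_norm_le ((integrable_heatK hs).const_mul (B * C))
      (f := fun y => ρ y * g y) (.of_forall fun y => by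
        have h0 := heatK_nonneg s y
        rw [Real.norm_eq_abs, abs_mul, hρ, abs_mul, abs_of_nonneg h0]
        calc |b y| * heatK s y * |g y| ≤ B * heatK s y * C := by
              gcongr
              · exact hB y
              · exact hg y
          _ = _ := by ring)
    rwa [MeasureTheory.integral_const_mul, integral_heatK hs, mul_one] at h
  have hDm : ∀ r, r ≤ t → Measurable (fun z => b z * backD c t r z) := fun r hr =>
    hb.measurable.mul (measurable_backD hc hr)
  have hDb : ∀ r, r ≤ t → ∀ z, |b z * backD c t r z| ≤ B * (M * (t - r)) := fun r hr z => by
    rw [abs_mul]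
    exact mul_le_mul (hB z) (abs_backD_le hM hr z) (abs_nonneg _) hB0
  set h0 : ℝ → ℝ := fun z => b z * backD c t s z with hh0
  have hVm : Measurable (fun r => ∫ y, ρ y * heatV h0 (r - s) y) := by
    have h4 : Measurable (fun q : ℝ × ℝ => heatV h0 (q.1 - s) q.2) :=
      Measurable.comp (g := fun p : ℝ × ℝ => heatV h0 p.1 p.2) (measurable_heatV (hDm s hst.le))
        (f := fun q : ℝ × ℝ => (q.1 - s, q.2)) (by fun_prop)
    exact ((hρc.measurable.comp measurable_snd).mul h4).stronglyMeasurable.integral_prod_right'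
      (ν := volume) |>.measurable
  have key := abs_integral_le_of_near_deriv (a := s) (t := t)
    (K := fun r => ∫ y, ρ y * heatV (fun z => b z * backD c t r z) (r - s) y)
    (Ψ := fun r => 2 * ∫ y, ρ y * heatP h0 (r - s) y)
    (Ψ' := fun r => ∫ y, ρ y * heatV h0 (r - s) y)
    (L := 42 * B ^ 2 * M * Real.sqrt (t - s)) (P := 2 * (B * (B * (M * (t - s)))))
    (Q := B * (6 * (B * (M * (t - s))))) hst (by positivity) (by positivity) ?_ ?_ hVm ?_ ?_
  · refine key.trans_eq ?_
    have e := Real.mul_self_sqrt hts.le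
    linear_combination 84 * B ^ 2 * M * e
  · intro r hr
    have h := (hasDerivAt_integral_heatP (hDm s hst.le) (hDb s hst.le) hρi
      (sub_pos.2 hr.1)).const_mul 2
    refine (HasDerivAt.comp_sub_const r s h).congr_deriv ?_
    ring
  · intro r hr
    rw [abs_mul, abs_two]
    gcongr
    exact htest _ _ fun y => abs_heatP_le (hDb s hst.le) _ y
  · intro r hr
    rw [mul_div_assoc]
    exact htest _ _ fun y => integral_k2_bound (sub_pos.2 hr.1) y (hDb s hst.le)
  · intro r hr
    have hrs : 0 < r - s := sub_pos.2 hr.1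
    have hsq : 0 < Real.sqrt (r - s) := Real.sqrt_pos.2 hrs
    have hint : ∀ r', r' ≤ t → Integrable
        (fun y => ρ y * heatV (fun z => b z * backD c t r' z) (r - s) y) := fun r' hr' =>
      hρi.mul_bdd (measurable_heatV' (hDm r' hr') _).aestronglyMeasurable
        (.of_forall fun y => integral_k2_bound hrs y (hDb r' hr'))
    have e : (∫ y, ρ y * heatV (fun z => b z * backD c t r z) (r - s) y)
        - ∫ y, ρ y * heatV h0 (r - s) y
        = ∫ y, ρ y * heatV (fun z => b z * (backD c t r z - backD c t s z)) (r - s) y := by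
      rw [← MeasureTheory.integral_sub (hint r hr.2) (hint s hst.le)]
      congr 1; funext y
      have hk : Integrable (fun z => k2 (r - s) (z - y)) := (integrable_k2 hrs).comp_sub_right y
      rw [← mul_sub]
      congr 1
      unfold heatV
      rw [← MeasureTheory.integral_sub]
      · congr 1; funext z; ring
      · exact hk.bdd_mul (hDm r hr.2).aestronglyMeasurable (.of_forall (hDb r hr.2))
      · exact hk.bdd_mul (hDm s hst.le).aestronglyMeasurable (.of_forall (hDb s hst.le))
    rw [e]
    refine (htest _ _ fun y => integral_k2_bound hrs y
      (M := B * (7 * M * Real.sqrt (t - s) * Real.sqrt (r - s))) fun z => ?_).trans_eq ?_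
    · rw [abs_mul]
      exact mul_le_mul (hB z) (abs_backD_sub_le hc hM hr.1.le hr.2 z) (abs_nonneg _) hB0
    · have e2 := Real.mul_self_sqrt hrs.le
      have : r - s = Real.sqrt (r - s) * Real.sqrt (r - s) := e2.symm
      set q := Real.sqrt (r - s)
      rw [this]
      field_simp
      ring

/-- The spatial integrals are iterated applications of the heat operators. -/
lemma integral_space_eq (b : ℝ → ℝ) (s₁ s₂ s₃ s₄ : ℝ) :
    (∫ y₁ : ℝ, ∫ y₂ : ℝ, ∫ y₃ : ℝ, ∫ y₄ : ℝ,
      b y₁ * b y₂ * b y₃ * b y₄ * heatK s₁ y₁ * heatK'' (s₂ - s₁) (y₂ - y₁)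
        * heatK (s₃ - s₂) (y₃ - y₂) * heatK'' (s₄ - s₃) (y₄ - y₃))
      = ∫ y, b y * heatK s₁ y *
          heatV (fun z => b z * pairG b (s₃ - s₂) (s₄ - s₃) z) (s₂ - s₁) y := by
  simp only [heatK''_eq]
  congr 1; funext y₁
  unfold heatV
  rw [← MeasureTheory.integral_const_mul]
  congr 1; funext y₂
  unfold pairG
  rw [show ∀ I : ℝ, b y₁ * heatK s₁ y₁ * (b y₂ * I * k2 (s₂ - s₁) (y₂ - y₁))
    = (b y₁ * heatK s₁ y₁ * b y₂ * k2 (s₂ - s₁) (y₂ - y₁)) * I from fun I => by ring,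
    ← MeasureTheory.integral_const_mul]
  congr 1; funext y₃
  unfold heatV
  rw [← mul_assoc, ← MeasureTheory.integral_const_mul]
  congr 1; funext y₄
  ring

/-- The source produced by the innermost time integral. -/
noncomputable def source (b : ℝ → ℝ) (t s y : ℝ) : ℝ := 2 * b y * (heatS b (t - s) y - b y)

lemma measurable_source (hb : Continuous b) (hB : ∀ x, |b x| ≤ B) (t : ℝ) :
    Measurable (fun p : ℝ × ℝ => source b t p.1 p.2) := by
  have h := continuous_heatS hb hB
  have h1 : Continuous (fun p : ℝ × ℝ => heatS b (t - p.1) p.2) :=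
    Continuous.comp (g := fun p : ℝ × ℝ => heatS b p.1 p.2) h
      (f := fun p : ℝ × ℝ => (t - p.1, p.2)) (by fun_prop)
  unfold source
  exact Continuous.measurable (by fun_prop)

lemma abs_source_le (hB : ∀ x, |b x| ≤ B) (t s y : ℝ) : |source b t s y| ≤ 4 * B ^ 2 := by
  have hB0 : 0 ≤ B := (abs_nonneg _).trans (hB 0)
  unfold source
  rw [abs_mul, abs_mul, abs_two]
  have h1 := (abs_sub (heatS b (t - s) y) (b y)).trans
    (add_le_add (abs_heatS_le hB (t - s) y) (hB y))
  calc 2 * |b y| * |heatS b (t - s) y - b y| ≤ 2 * B * (B + B) := by gcongr; exact hB y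
    _ = _ := by ring

lemma integral_s4_eq (hb : Continuous b) (hB : ∀ x, |b x| ≤ B) {s₁ s₂ s₃ t : ℝ} (h1 : 0 < s₁)
    (h12 : s₁ < s₂) (h23 : s₂ < s₃) (h3 : s₃ ≤ t) :
    (∫ s₄ in s₃..t, ∫ y, b y * heatK s₁ y *
        heatV (fun z => b z * pairG b (s₃ - s₂) (s₄ - s₃) z) (s₂ - s₁) y)
      = ∫ y, b y * heatK s₁ y *
          heatV (fun z => b z * heatP (source b t s₃) (s₃ - s₂) z) (s₂ - s₁) y := by
  obtain ⟨C, hC⟩ := exists_pairG_integral hb hB (sub_pos.2 h23) (sub_nonneg.2 h3)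
  have hρi : Integrable (fun y => b y * heatK s₁ y) :=
    (integrable_heatK h1).bdd_mul hb.aestronglyMeasurable (.of_forall hB)
  rw [integral_swap_time (ρ := fun y => b y * heatK s₁ y) hρi hb hB (sub_pos.2 h12)
    (h := fun r z => pairG b (s₃ - s₂) (r - s₃) z) (C := C) ?_ h3 ?_ ?_]
  · have e : ∀ z, ∫ r in s₃..t, pairG b (s₃ - s₂) (r - s₃) z
        = heatP (source b t s₃) (s₃ - s₂) z := by
      intro z
      rw [intervalIntegral.integral_comp_sub_right (fun u => pairG b (s₃ - s₂) u z) s₃, sub_self,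
        (hC z).2.2]
      rfl
    simp only [e]
  · exact Measurable.comp (g := fun p : ℝ × ℝ => pairG b (s₃ - s₂) p.1 p.2)
      (measurable_pairG hb.measurable _) (f := fun p : ℝ × ℝ => (p.1 - s₃, p.2)) (by fun_prop)
  · intro y
    have := (hC y).1.comp_sub_right s₃
    simpa using this
  · intro y
    rw [intervalIntegral.integral_comp_sub_right (fun u => |pairG b (s₃ - s₂) u y|) s₃, sub_self]
    exact (hC y).2.1

lemma integral_s3_eq (hb : Continuous b) (hB : ∀ x, |b x| ≤ B) {s₁ s₂ t : ℝ} (h1 : 0 < s₁)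
    (h12 : s₁ < s₂) (h2 : s₂ ≤ t) :
    (∫ s₃ in s₂..t, ∫ y, b y * heatK s₁ y *
        heatV (fun z => b z * heatP (source b t s₃) (s₃ - s₂) z) (s₂ - s₁) y)
      = ∫ y, b y * heatK s₁ y *
          heatV (fun z => b z * backD (source b t) t s₂ z) (s₂ - s₁) y := by
  have hρi : Integrable (fun y => b y * heatK s₁ y) :=
    (integrable_heatK h1).bdd_mul hb.aestronglyMeasurable (.of_forall hB)
  have hm := measurable_source hb hB t
  have hM := abs_source_le hB t
  have hi := fun y => intervalIntegrable_heatP hm hM s₂ y h2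
  rw [integral_swap_time (ρ := fun y => b y * heatK s₁ y) hρi hb hB (sub_pos.2 h12)
    (h := fun r z => heatP (source b t r) (r - s₂) z) (C := 4 * B ^ 2 * (t - s₂))
    (measurable_heatP_diag hm s₂) h2 hi ?_]
  · rfl
  · intro y
    have h := intervalIntegral.norm_integral_le_of_norm_le_const (a := s₂) (b := t)
      (C := 4 * B ^ 2) (f := fun r => |heatP (source b t r) (r - s₂) y|) fun r _ => by
        rw [Real.norm_eq_abs, abs_abs]; exact abs_heatP_le (hM r) _ _
    rw [abs_of_nonneg (sub_nonneg.2 h2)] at h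
    exact (le_abs_self _).trans h

end Main

lemma integral_congr_Ioc {f g : ℝ → ℝ} {a t : ℝ} (hat : a ≤ t)
    (h : ∀ r ∈ Set.Ioc a t, f r = g r) : ∫ r in a..t, f r = ∫ r in a..t, g r := by
  rw [intervalIntegral.integral_of_le hat, intervalIntegral.integral_of_le hat]
  exact setIntegral_congr_fun measurableSet_Ioc h

/-- there is a constant `C₄ > 0` such that for every bounded (by `B`) continuous
`b : ℝ → ℝ` and every `t > 0`, the quantity
`J₅ = ∫_0^t ∫_{s₁}^t ∫_{s₂}^t ∫_{s₃}^t ∫_{ℝ⁴} b(y₁)b(y₂)b(y₃)b(y₄)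
  q_{s₁}(y₁) q''_{s₂−s₁}(y₂−y₁) q_{s₃−s₂}(y₃−y₂) q''_{s₄−s₃}(y₄−y₃) dy ds`
satisfies `|J₅| ≤ C₄ ‖b‖_∞⁴ t²`. -/
theorem exists_const_abs_J_five_le :
    ∃ C₄ > (0 : ℝ), ∀ (b : ℝ → ℝ), Continuous b → ∀ B : ℝ, (∀ x, |b x| ≤ B) →
      ∀ t : ℝ, 0 < t →
      |∫ s₁ in (0 : ℝ)..t, ∫ s₂ in s₁..t, ∫ s₃ in s₂..t, ∫ s₄ in s₃..t,
          ∫ y₁ : ℝ, ∫ y₂ : ℝ, ∫ y₃ : ℝ, ∫ y₄ : ℝ,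
            b y₁ * b y₂ * b y₃ * b y₄ * heatK s₁ y₁ * heatK'' (s₂ - s₁) (y₂ - y₁)
              * heatK (s₃ - s₂) (y₃ - y₂) * heatK'' (s₄ - s₃) (y₄ - y₃)|
        ≤ C₄ * B ^ 4 * t ^ 2 := by
  refine ⟨352, by norm_num, fun b hb B hB t ht => ?_⟩
  simp only [integral_space_eq]
  have hbound := intervalIntegral.norm_integral_le_of_norm_le_const (a := 0) (b := t)
    (C := 352 * B ^ 4 * t)
    (f := fun s₁ => ∫ s₂ in s₁..t, ∫ s₃ in s₂..t, ∫ s₄ in s₃..t, ∫ y, b y * heatK s₁ y *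
      heatV (fun z => b z * pairG b (s₃ - s₂) (s₄ - s₃) z) (s₂ - s₁) y) ?_
  · rw [sub_zero, abs_of_pos ht] at hbound
    calc _ ≤ _ := hbound
      _ = _ := by ring
  · intro s₁ hs₁
    rw [Set.uIoc_of_le ht.le] at hs₁
    have e : ∫ s₂ in s₁..t, ∫ s₃ in s₂..t, ∫ s₄ in s₃..t, ∫ y, b y * heatK s₁ y *
          heatV (fun z => b z * pairG b (s₃ - s₂) (s₄ - s₃) z) (s₂ - s₁) y
        = ∫ s₂ in s₁..t, ∫ y, b y * heatK s₁ y *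
          heatV (fun z => b z * backD (source b t) t s₂ z) (s₂ - s₁) y := by
      refine integral_congr_Ioc hs₁.2 fun s₂ hs₂ => ?_
      rw [← integral_s3_eq hb hB hs₁.1 hs₂.1 hs₂.2]
      exact integral_congr_Ioc hs₂.2 fun s₃ hs₃ =>
        integral_s4_eq hb hB hs₁.1 hs₂.1 hs₃.1 hs₃.2
    simp only [e]
    rcases hs₁.2.eq_or_lt with h | h
    · rw [h, intervalIntegral.integral_same, norm_zero]; positivity
    · refine (abs_integral_backD_le hb hB (measurable_source hb hB t) (abs_source_le hB t)
        hs₁.1 h).trans ?_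
      have h4 : 0 ≤ B ^ 4 * s₁ := mul_nonneg (by positivity) hs₁.1.le
      calc 88 * B ^ 2 * (4 * B ^ 2) * (t - s₁) = 352 * B ^ 4 * t - 352 * (B ^ 4 * s₁) := by ring
        _ ≤ _ := by linarith
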